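/- arXiv:2204.12634 — 3 statements merged into one kernel-verified Lean document; each statement's English description precedes it below -/
import Mathlib

section
/- Fix Θ_* ∈ ℝ^{m×q}, μ > 0, 0 < β < 2, 0 < γ < √((2−β)/β), and suppose α := 2(1−γ) − γ(2−3β)²/(β(2−(1+γ²)β)) > 0. Let (φ_k)_{k≥0} be any sequence in ℝ^q and run the high-order tuner: N_k = max{μ, ‖φ_k‖²}, ε_{k+1} = (Θ̂_k − Θ_*)φ_k, Θ̄_k = Θ̂_k − (γβ/N_k) ε_{k+1} φ_k^⊤, Θ̂_{k+1} = Θ̄_k − β(Θ̄_k − Ξ̂_k), Ξ̂_{k+1} = Ξ̂_k − (γ/N_k)((Θ̂_{k+1} − Θ̂_k)φ_k + ε_{k+1})φ_k^⊤, initialized with Ξ̂_0 = Θ̂_0. Then for all k ≥ 0, ‖Ξ̂_k − Θ_*‖_F² + ‖Θ̂_k − Ξ̂_k‖_F² ≤ ‖Ξ̂_0 − Θ_*‖_F² + ‖Θ̂_0 − Ξ̂_0‖_F²; in particular the parameter error Θ̂_k − Θ_* and the auxiliary estimate Ξ̂_k are bounded uniformly in k. -/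
open scoped BigOperators

/-- Completing the square in the quadratic form that bounds the one-step Lyapunov decrement. -/
lemma tuner_quadratic_nonneg {γ β : ℝ} (hγ0 : 0 < γ)
    (hδ : 0 < β * (2 - (1 + γ ^ 2) * β))
    (hα : 0 < 2 * (1 - γ) - γ * (2 - 3 * β) ^ 2 / (β * (2 - (1 + γ ^ 2) * β))) (G σ : ℝ) :
    0 ≤ 2 * γ * (1 - γ) * G ^ 2 - 2 * γ * (2 - 3 * β) * G * σ
      + β * (2 - (1 + γ ^ 2) * β) * σ ^ 2 := by
  set δ := β * (2 - (1 + γ ^ 2) * β)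
  have key : 2 * γ * (1 - γ) * G ^ 2 - 2 * γ * (2 - 3 * β) * G * σ + δ * σ ^ 2
      = γ * (2 * (1 - γ) - γ * (2 - 3 * β) ^ 2 / δ) * G ^ 2
        + (δ * σ - γ * (2 - 3 * β) * G) ^ 2 / δ := by
    field_simp
    ring
  rw [key]
  positivity

/-- The one-step Lyapunov inequality, reduced to the scalars `y = ⟨x, φ⟩`, `σ = ⟨u, φ⟩`,
`U = ‖u‖²` and `P = ‖φ‖²`. -/
lemma tuner_scalar_decrease {γ β N P U y σ e G : ℝ} (hγ0 : 0 < γ) (hβ0 : 0 < β) (hβ2 : β < 2)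
    (hδ : 0 < β * (2 - (1 + γ ^ 2) * β))
    (hα : 0 < 2 * (1 - γ) - γ * (2 - 3 * β) ^ 2 / (β * (2 - (1 + γ ^ 2) * β)))
    (hN : 0 < N) (hP : 0 ≤ P) (hPN : P ≤ N) (hU : 0 ≤ U) (hσ : σ ^ 2 ≤ U * P)
    (he : e = y + σ + γ * β * e / N * P) (hG : G = y + (1 - β) * σ) :
    -2 * (γ * G / N) * y + (γ * G / N) ^ 2 * P + (1 - β) ^ 2 * U
        + 2 * (1 - β) * (γ * G / N) * σ + (γ * G / N) ^ 2 * P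
      ≤ U + 2 * (γ * β * e / N) * σ + (γ * β * e / N) ^ 2 * P := by
  obtain ⟨p, rfl⟩ : ∃ p, P = p * N := ⟨P / N, by field_simp⟩
  have hp0 : 0 ≤ p := nonneg_of_mul_nonneg_left hP hN
  have hp1 : p ≤ 1 := by nlinarith
  have he' : e = y + σ + γ * β * e * p := by
    rwa [show γ * β * e / N * (p * N) = γ * β * e * p by field_simp] at he
  have hσU : σ ^ 2 ≤ N * U := by nlinarith [mul_nonneg hU hN.le]
  have hquad := tuner_quadratic_nonneg hγ0 hδ hα G σ
  have hmain : 0 ≤ N * U + 2 * (γ * β * e) * σ + (γ * β * e) ^ 2 * p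
      - (-2 * (γ * G) * y + 2 * ((γ * G) ^ 2 * p) + (1 - β) ^ 2 * (N * U)
        + 2 * (1 - β) * (γ * G) * σ) := by
    have hid : N * U + 2 * (γ * β * e) * σ + (γ * β * e) ^ 2 * p
      - (-2 * (γ * G) * y + 2 * ((γ * G) ^ 2 * p) + (1 - β) ^ 2 * (N * U)
        + 2 * (1 - β) * (γ * G) * σ)
        = (2 * γ * (1 - γ) * G ^ 2 - 2 * γ * (2 - 3 * β) * G * σ
            + β * (2 - (1 + γ ^ 2) * β) * σ ^ 2)
          + 2 * γ ^ 2 * G ^ 2 * (1 - p) + β * (2 - β) * (N * U - σ ^ 2)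
          + 2 * γ * β ^ 2 * σ ^ 2 + γ ^ 2 * β ^ 2 * p * (e + σ) ^ 2
          + γ ^ 2 * β ^ 2 * (1 - p) * σ ^ 2 := by
      obtain rfl : y = G - (1 - β) * σ := by linarith
      linear_combination (2 * γ * β * σ) * he'
    have h1 : 0 ≤ 1 - p := by linarith
    have h2 : 0 ≤ 2 - β := by linarith
    have h3 : 0 ≤ N * U - σ ^ 2 := by linarith
    rw [hid]
    positivity
  rw [← sub_nonneg]
  refine (div_nonneg hmain hN.le).trans_eq ?_
  field_simp
  ring

/-- The one-step Lyapunov inequality for a single row of the parameter matrices. -/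
lemma tuner_row_decrease {ι : Type*} [Fintype ι] {γ β N e G : ℝ} (x u φ : ι → ℝ)
    (hγ0 : 0 < γ) (hβ0 : 0 < β) (hβ2 : β < 2)
    (hδ : 0 < β * (2 - (1 + γ ^ 2) * β))
    (hα : 0 < 2 * (1 - γ) - γ * (2 - 3 * β) ^ 2 / (β * (2 - (1 + γ ^ 2) * β)))
    (hN : 0 < N) (hPN : ∑ j, φ j ^ 2 ≤ N)
    (he : e = ∑ j, (x j + (u j + γ * β * e / N * φ j)) * φ j)
    (hG : G = ∑ j, (x j + (1 - β) * u j) * φ j) :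
    ∑ j, (x j - γ * G / N * φ j) ^ 2 + ∑ j, ((1 - β) * u j + γ * G / N * φ j) ^ 2
      ≤ ∑ j, x j ^ 2 + ∑ j, (u j + γ * β * e / N * φ j) ^ 2 := by
  have hsq (a b : ℝ) (v w : ι → ℝ) : ∑ j, (a * v j + b * w j) ^ 2
      = a ^ 2 * ∑ j, v j ^ 2 + 2 * a * b * ∑ j, v j * w j + b ^ 2 * ∑ j, w j ^ 2 := by
    simp only [Finset.mul_sum, ← Finset.sum_add_distrib]
    exact Finset.sum_congr rfl fun j _ => by ring
  have he' : e = ∑ j, x j * φ j + ∑ j, u j * φ j + γ * β * e / N * ∑ j, φ j ^ 2 := by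
    refine he.trans ?_
    simp only [Finset.mul_sum, ← Finset.sum_add_distrib]
    exact Finset.sum_congr rfl fun j _ => by ring
  have hG' : G = ∑ j, x j * φ j + (1 - β) * ∑ j, u j * φ j := by
    rw [hG]
    simp only [Finset.mul_sum, ← Finset.sum_add_distrib]
    exact Finset.sum_congr rfl fun j _ => by ring
  have hscalar := tuner_scalar_decrease hγ0 hβ0 hβ2 hδ hα hN
    (Finset.sum_nonneg fun j _ => sq_nonneg (φ j)) hPN
    (Finset.sum_nonneg fun j _ => sq_nonneg (u j))
    (Finset.sum_mul_sq_le_sq_mul_sq Finset.univ u φ) he' hG'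
  have h1 := hsq 1 (-(γ * G / N)) x φ
  have h2 := hsq (1 - β) (γ * G / N) u φ
  have h3 := hsq 1 (γ * β * e / N) u φ
  simp only [one_mul, neg_mul, ← sub_eq_add_neg] at h1 h3
  rw [h1, h2, h3]
  linarith

/-- Summing entrywise `(a + b)² ≤ 2 (a² + b²)` over a matrix. -/
lemma sum_sq_add_le {m n : Type*} [Fintype m] [Fintype n] (A B : Matrix m n ℝ) :
    ∑ i, ∑ j, (A + B) i j ^ 2 ≤ 2 * (∑ i, ∑ j, A i j ^ 2 + ∑ i, ∑ j, B i j ^ 2) := by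
  simp only [← Finset.sum_add_distrib, Finset.mul_sum]
  exact Finset.sum_le_sum fun i _ => Finset.sum_le_sum fun j _ => add_sq_le

/-- along the high-order tuner, the Lyapunov function
    ‖Ξ̂_k − Θ_*‖_F² + ‖Θ̂_k − Ξ̂_k‖_F² never exceeds its initial value; in
    particular the parameter error Θ̂_k − Θ_* and the auxiliary estimate Ξ̂_k
    are bounded uniformly in k. -/
theorem hot_parameter_error_bounded {m q : ℕ}
    (Θstar : Matrix (Fin m) (Fin q) ℝ) (μ γ β : ℝ)
    (hμ : 0 < μ) (hβ0 : 0 < β) (hβ2 : β < 2)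
    (hγ0 : 0 < γ) (hγ : γ < Real.sqrt ((2 - β) / β))
    (hα : 0 < 2 * (1 - γ) - γ * (2 - 3 * β) ^ 2 / (β * (2 - (1 + γ ^ 2) * β)))
    (φ : ℕ → Fin q → ℝ)
    (Θhat Ξhat Θbar : ℕ → Matrix (Fin m) (Fin q) ℝ)
    (N : ℕ → ℝ) (hN : ∀ k, N k = max μ (∑ j, φ k j ^ 2))
    (ε : ℕ → Fin m → ℝ) (hε : ∀ k, ε (k + 1) = (Θhat k - Θstar).mulVec (φ k))
    (hΘbar : ∀ k, Θbar k
      = Θhat k - (γ * β / N k) • Matrix.vecMulVec (ε (k + 1)) (φ k))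
    (hΘ : ∀ k, Θhat (k + 1) = Θbar k - β • (Θbar k - Ξhat k))
    (hΞ : ∀ k, Ξhat (k + 1) = Ξhat k - (γ / N k) • Matrix.vecMulVec
      ((Θhat (k + 1) - Θhat k).mulVec (φ k) + ε (k + 1)) (φ k))
    (hinit : Ξhat 0 = Θhat 0) :
    (∀ k, (∑ i, ∑ j, (Ξhat k - Θstar) i j ^ 2)
          + (∑ i, ∑ j, (Θhat k - Ξhat k) i j ^ 2)
        ≤ (∑ i, ∑ j, (Ξhat 0 - Θstar) i j ^ 2)
          + (∑ i, ∑ j, (Θhat 0 - Ξhat 0) i j ^ 2)) ∧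
      ∃ C : ℝ, ∀ k,
        Real.sqrt (∑ i, ∑ j, (Θhat k - Θstar) i j ^ 2) ≤ C ∧
        Real.sqrt (∑ i, ∑ j, (Ξhat k) i j ^ 2) ≤ C := by
  have hδ : 0 < β * (2 - (1 + γ ^ 2) * β) := by
    have h := (Real.lt_sqrt hγ0.le).1 hγ
    rw [lt_div_iff₀ hβ0] at h
    exact mul_pos hβ0 (by linarith)
  have hstep : ∀ k, (∑ i, ∑ j, (Ξhat (k + 1) - Θstar) i j ^ 2)
        + (∑ i, ∑ j, (Θhat (k + 1) - Ξhat (k + 1)) i j ^ 2)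
      ≤ (∑ i, ∑ j, (Ξhat k - Θstar) i j ^ 2) + (∑ i, ∑ j, (Θhat k - Ξhat k) i j ^ 2) := by
    intro k
    have hNpos : 0 < N k := hN k ▸ lt_max_of_lt_left hμ
    have hPN : ∑ j, φ k j ^ 2 ≤ N k := hN k ▸ le_max_right _ _
    rw [← Finset.sum_add_distrib, ← Finset.sum_add_distrib]
    refine Finset.sum_le_sum fun i _ => ?_
    have hG : ((Θhat (k + 1) - Θhat k).mulVec (φ k) + ε (k + 1)) i
        = ∑ j, (Θhat (k + 1) - Θstar) i j * φ k j := by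
      rw [hε, ← Matrix.add_mulVec, sub_add_sub_cancel]
      rfl
    have he : ε (k + 1) i = ∑ j, (Θhat k - Θstar) i j * φ k j := by
      rw [hε]
      rfl
    have hbar (j) : Θbar k i j = Θhat k i j - γ * β / N k * (ε (k + 1) i * φ k j) := by
      simp [hΘbar k, Matrix.vecMulVec_apply]
    have hΘ' (j) : Θhat (k + 1) i j = Θbar k i j - β * (Θbar k i j - Ξhat k i j) := by
      simp [hΘ k]
    have hΞ' (j) : Ξhat (k + 1) i j = Ξhat k i j - γ / N k *
        (((Θhat (k + 1) - Θhat k).mulVec (φ k) + ε (k + 1)) i * φ k j) := by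
      rw [hΞ k, Matrix.sub_apply, Matrix.smul_apply, Matrix.vecMulVec_apply, smul_eq_mul]
    set G := ((Θhat (k + 1) - Θhat k).mulVec (φ k) + ε (k + 1)) i
    have hrow := tuner_row_decrease (e := ε (k + 1) i) (G := G)
      (fun j => Ξhat k i j - Θstar i j) (fun j => Θbar k i j - Ξhat k i j)
      (φ k) hγ0 hβ0 hβ2 hδ hα hNpos hPN
      (he.trans <| Finset.sum_congr rfl fun j _ => by
        rw [hbar, Matrix.sub_apply]
        ring)
      (hG.trans <| Finset.sum_congr rfl fun j _ => by
        rw [Matrix.sub_apply, hΘ']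
        ring)
    refine (congrArg₂ (· + ·) ?_ ?_).trans_le (hrow.trans_eq (congrArg₂ (· + ·) ?_ ?_)) <;>
      refine Finset.sum_congr rfl fun j _ => ?_ <;>
      simp only [Matrix.sub_apply, hΞ', hΘ', hbar] <;> ring
  have hV : ∀ k, (∑ i, ∑ j, (Ξhat k - Θstar) i j ^ 2)
        + (∑ i, ∑ j, (Θhat k - Ξhat k) i j ^ 2)
      ≤ (∑ i, ∑ j, (Ξhat 0 - Θstar) i j ^ 2) + (∑ i, ∑ j, (Θhat 0 - Ξhat 0) i j ^ 2) :=
    fun k => antitone_nat_of_succ_le (f := fun k => (∑ i, ∑ j, (Ξhat k - Θstar) i j ^ 2)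
      + (∑ i, ∑ j, (Θhat k - Ξhat k) i j ^ 2)) hstep (Nat.zero_le k)
  refine ⟨hV, √(2 * ((∑ i, ∑ j, (Ξhat 0 - Θstar) i j ^ 2)
    + (∑ i, ∑ j, (Θhat 0 - Ξhat 0) i j ^ 2) + ∑ i, ∑ j, Θstar i j ^ 2)), fun k => ?_⟩
  have hk := hV k
  have hΘsum := sum_sq_add_le (Θhat k - Ξhat k) (Ξhat k - Θstar)
  have hΞsum := sum_sq_add_le (Ξhat k - Θstar) Θstar
  rw [sub_add_sub_cancel] at hΘsum
  rw [sub_add_cancel] at hΞsum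
  have hstar : 0 ≤ ∑ i, ∑ j, Θstar i j ^ 2 := by positivity
  have hd : 0 ≤ ∑ i, ∑ j, (Θhat k - Ξhat k) i j ^ 2 := by positivity
  exact ⟨Real.sqrt_le_sqrt (by linarith), Real.sqrt_le_sqrt (by linarith)⟩
end

section
/- Consider the plant x_{p(k+1)} = A_p x_{pk} + B(Σ_{i=1}^p a_i f_i(x_{pk}) + u_k) with A_p ∈ ℝ^{n×n}, B ∈ ℝ^{n×m} of full column rank, a_i ∈ ℝ^m, and each f_i : ℝ^n → ℝ globally Lipschitz with f_i(0) = 0. Suppose A_m ∈ ℝ^{n×n} has spectral radius < 1 and satisfies the matching condition A_m = A_p + B K_* for some K_* ∈ ℝ^{m×n}, and the reference model is x_{m(k+1)} = A_m x_{mk} + B r_k with ‖r_k‖ ≤ r_max for all k. Let φ_k = (x_{pk}, −f_1(x_{pk}), ..., −f_p(x_{pk})) ∈ ℝ^{n+p}, let the control be u_k = Θ̂_k φ_k + r_k, the tracking error e_k = x_{pk} − x_{mk}, the prediction error ε_{k+1} = (B^⊤B)^{−1}B^⊤(e_{k+1} − A_m e_k), and update the parameter estimate by the high-order tuner: N_k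 = max{μ, ‖φ_k‖²}, Θ̄_k = Θ̂_k − (γβ/N_k) ε_{k+1} φ_k^⊤, Θ̂_{k+1} = Θ̄_k − β(Θ̄_k − Ξ̂_k), Ξ̂_{k+1} = Ξ̂_k − (γ/N_k)((Θ̂_{k+1} − Θ̂_k)φ_k + ε_{k+1})φ_k^⊤, with Ξ̂_0 = Θ̂_0 arbitrary, μ > 0, 0 < β < 2, 0 < γ < √((2−β)/β), and α := 2(1−γ) − γ(2−3β)²/(β(2−(1+γ²)β)) > 0. Then lim_{k→∞} ‖e_k‖ = 0. -/
open scoped BigOperators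
open Matrix
open Filter Topology

/-- The determinant of the decrease form of the tuner (up to the step `g`) is at least half of the
numerator of the rate `2 (1 - g) - g (2 - 3 β)² / (β (2 - (1 + g²) β))`. -/
theorem half_rate_le_form_det {β g : ℝ} (hβ0 : 0 < β) (hβ2 : β < 2) (hg0 : 0 ≤ g) (hg1 : g ≤ 1)
    (hG : 0 ≤ 2 * (1 - g) * (β * (2 - (1 + g ^ 2) * β)) - g * (2 - 3 * β) ^ 2) :
    (2 * (1 - g) * (β * (2 - (1 + g ^ 2) * β)) - g * (2 - 3 * β) ^ 2) / 2 ≤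
      4 * (1 - g * (β * (1 - β))) - 2 * (1 + g) * ((1 - g * (β * (1 - β))) ^ 2 +
        (1 - g * (β * (1 - β)) - β) ^ 2) - g * (β * (1 - β)) ^ 2 := by
  obtain ⟨x, rfl⟩ : ∃ x, β = 1 - x := ⟨1 - β, by ring⟩
  set K := (1 - x) * (1 - 4 * x - x ^ 2) + g * (2 + 2 * x + 4 * x ^ 3)
    - g ^ 2 * ((1 - x) * (2 + 4 * x ^ 2)) with hK
  set G := 2 * (1 - g) * ((1 - x) * (2 - (1 + g ^ 2) * (1 - x))) - g * (2 - 3 * (1 - x)) ^ 2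
    with hGdef
  suffices h : 0 ≤ G / 2 + g * (1 - x) * K by
    rw [hK, hGdef] at h
    rw [hGdef]
    nlinarith only [h]
  have hgx : 0 ≤ g * (1 - x) := by positivity
  rcases le_total x 0 with hx | hx
  · have hK0 : 0 ≤ K := by
      obtain ⟨y, rfl⟩ : ∃ y, x = -y := ⟨-x, by ring⟩
      have hy : 0 ≤ y := by linarith
      have hy1 : y < 1 := by linarith
      have hg : g ≤ 2 / 3 := by
        have h1 : 0 ≤ (1 - g) * (g ^ 2 * (1 + y) ^ 2) := mul_nonneg (by linarith) (by positivity)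
        have h2 : 0 ≤ (1 - g) * y ^ 2 := mul_nonneg (by linarith) (by positivity)
        have h3 : 0 ≤ g * (6 * y + 9 * y ^ 2) := by positivity
        nlinarith only [hG, hGdef, h1, h2, h3]
      have h0 : 0 ≤ (1 + y) * (1 + 4 * y - y ^ 2) := by
        apply mul_nonneg <;> nlinarith
      have h1 : 0 ≤ 13 + 25 * y + 11 * y ^ 2 - 49 * y ^ 3 := by
        have hA : y ^ 3 ≤ y ^ 2 := pow_le_pow_of_le_one hy hy1.le (by norm_num)
        have hB : y ^ 2 ≤ y := by nlinarith
        linarith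
      have h2 : 0 ≤ g * (2 / 3 - g) * ((1 + y) * (2 + 4 * y ^ 2)) :=
        mul_nonneg (mul_nonneg hg0 (by linarith)) (by positivity)
      have h3 := mul_nonneg (show 0 ≤ 2 / 3 - g by linarith) h0
      have h4 := mul_nonneg hg0 h1
      rw [hK]
      nlinarith only [h2, h3, h4]
    positivity
  rcases le_total (3 / 4 * (1 - x)) g with hg | hg
  · have hK0 : 0 ≤ K := by
      have h1 : 0 ≤ 1 - x - 4 * x ^ 2 + 6 * x ^ 3 := by
        nlinarith [mul_nonneg hx (sq_nonneg (x - 11 / 20)), sq_nonneg (x - 11 / 20)]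
      have h2 : 0 ≤ g * (1 - g) * ((1 - x) * (2 + 4 * x ^ 2)) :=
        mul_nonneg (mul_nonneg hg0 (by linarith)) (by positivity)
      have h3 := mul_nonneg (show 0 ≤ g - 3 / 4 * (1 - x) by linarith)
        (show 0 ≤ 4 * x * (1 - x) + 8 * x ^ 3 by positivity)
      have h4 := mul_nonneg hβ0.le h1
      rw [hK]
      nlinarith only [h2, h3, h4]
    positivity
  · rcases le_total (x ^ 2 + 4 * x - 1) 0 with hc | hc
    · have hK0 : 0 ≤ K := by
        have h2 : 0 ≤ g * (1 - g) * ((1 - x) * (2 + 4 * x ^ 2)) :=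
          mul_nonneg (mul_nonneg hg0 (by linarith)) (by positivity)
        have h3 := mul_nonneg hg0 (show 0 ≤ 4 * x * (1 - x) + 8 * x ^ 3 by positivity)
        have h4 := mul_nonneg hβ0.le (sub_nonneg.2 hc)
        rw [hK]
        nlinarith only [h2, h3, h4]
      positivity
    · have hKlow : -((1 - x) * (x ^ 2 + 4 * x - 1)) ≤ K := by
        have h2 : 0 ≤ g * (1 - g) * ((1 - x) * (2 + 4 * x ^ 2)) :=
          mul_nonneg (mul_nonneg hg0 (by linarith)) (by positivity)
        have h3 := mul_nonneg hg0 (show 0 ≤ 4 * x * (1 - x) + 8 * x ^ 3 by positivity)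
        rw [hK]
        nlinarith only [h2, h3]
      have hKg := mul_le_mul_of_nonneg_left hKlow hgx
      have hGlow : (1 - x) * ((1 - 3 / 4 * (1 - x)) * ((1 + x) - (3 / 4 * (1 - x)) ^ 2 * (1 - x))
          - 3 / 8 * (3 * x - 1) ^ 2) ≤ G / 2 := by
        have h1 : g ^ 2 ≤ (3 / 4 * (1 - x)) ^ 2 := pow_le_pow_left₀ hg0 hg 2
        have h2 : 0 ≤ (1 + x) - (3 / 4 * (1 - x)) ^ 2 * (1 - x) := by
          nlinarith [mul_nonneg hx hβ0.le, mul_nonneg hx (sq_nonneg (1 - x))]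
        have h3 : (1 - 3 / 4 * (1 - x)) * ((1 + x) - (3 / 4 * (1 - x)) ^ 2 * (1 - x)) ≤
            (1 - g) * ((1 + x) - g ^ 2 * (1 - x)) := by
          apply mul_le_mul _ _ h2 (by linarith)
          · linarith
          · nlinarith
        have h4 := mul_le_mul_of_nonneg_left h3 hβ0.le
        have h5 := mul_le_mul_of_nonneg_right hg (sq_nonneg (3 * x - 1))
        rw [hGdef]
        nlinarith only [h4, h5]
      have hKup : g * (1 - x) * ((1 - x) * (x ^ 2 + 4 * x - 1)) ≤
          3 / 4 * (1 - x) * (1 - x) * ((1 - x) * (x ^ 2 + 4 * x - 1)) := by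
        gcongr
      have hfin : 0 ≤ (1 - 3 / 4 * (1 - x)) * ((1 + x) - (3 / 4 * (1 - x)) ^ 2 * (1 - x))
          - 3 / 8 * (3 * x - 1) ^ 2 - 3 / 4 * (1 - x) * ((1 - x) * (x ^ 2 + 4 * x - 1)) := by
        nlinarith [mul_nonneg hx hβ0.le, mul_nonneg hx (sq_nonneg (1 - x)), mul_nonneg hβ0.le hc,
          mul_nonneg (mul_nonneg hx hβ0.le) hc]
      have hfin' := mul_nonneg hβ0.le hfin
      nlinarith only [hfin', hKup, hGlow, hKg]

theorem step_mul_le_two_sub {β g : ℝ} (hβ0 : 0 < β) (hβ2 : β < 2) (hg0 : 0 ≤ g) (hg1 : g ≤ 1)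
    (hG : 0 ≤ 2 * (1 - g) * (β * (2 - (1 + g ^ 2) * β)) - g * (2 - 3 * β) ^ 2) :
    g * β ≤ 2 - β := by
  rcases le_total β 1 with h | h
  · nlinarith
  by_contra! hc
  have hg : 0 < g := by nlinarith
  have h1 : 0 ≤ (1 - g) * (g ^ 2 * β ^ 2) := mul_nonneg (by linarith) (by positivity)
  have h2 : 0 ≤ (1 - g) * β * (g * β - (2 - β)) :=
    mul_nonneg (mul_nonneg (by linarith) hβ0.le) (by linarith)
  have h3 : g * (3 * β - 2) ^ 2 ≤ g * (2 * (1 - g) * β ^ 2) := by nlinarith only [hG, h1, h2]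
  have h4 := le_of_mul_le_mul_left h3 hg
  rcases le_total g (1 / 2) with h5 | h5
  · have : 4 / 3 < β := by nlinarith
    nlinarith [mul_nonneg hg0 (sq_nonneg β)]
  · nlinarith [mul_nonneg (sub_nonneg.2 h5) (sq_nonneg β)]
theorem form_mul_diag_eq (β g s w t : ℝ)
    (ht : t = s * (1 - g * (β * (1 - β))) - β * w) :
    β * ((2 - β) * (1 + 2 * g) - 2 * g ^ 2 * β) *
      (2 * g * t * (s - w) - g ^ 2 * t ^ 2 + β * (2 - β) * w ^ 2
        - 2 * (1 - β) * w * (g * (t - β * (1 - β) * s)) - (g * (t - β * (1 - β) * s)) ^ 2) =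
    (β * ((2 - β) * (1 + 2 * g) - 2 * g ^ 2 * β) * w
      - g * (2 - (1 - β) * (β * (1 - β)) - 2 * g * β - 2 * (β * (1 - β)) * g * (1 - β)
        + 2 * g ^ 2 * β * (β * (1 - β))) * s) ^ 2 +
    g * (4 * (1 - g * (β * (1 - β))) - 2 * (1 + g) * ((1 - g * (β * (1 - β))) ^ 2 +
        (1 - g * (β * (1 - β)) - β) ^ 2) - g * (β * (1 - β)) ^ 2) * s ^ 2 := by
  subst ht; ring

theorem form_lower_bound {β γ g s w t : ℝ} (hβ0 : 0 < β) (hβ2 : β < 2) (hγ1 : γ ≤ 1)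
    (hD : 0 ≤ 2 - (1 + γ ^ 2) * β)
    (hG : 0 ≤ 2 * (1 - γ) * (β * (2 - (1 + γ ^ 2) * β)) - γ * (2 - 3 * β) ^ 2)
    (hg0 : 0 ≤ g) (hgγ : g ≤ γ)
    (ht : t = s * (1 - g * (β * (1 - β))) - β * w) :
    g * ((2 * (1 - γ) * (β * (2 - (1 + γ ^ 2) * β)) - γ * (2 - 3 * β) ^ 2) / 6) * s ^ 2 ≤
      2 * g * t * (s - w) - g ^ 2 * t ^ 2 + β * (2 - β) * w ^ 2
        - 2 * (1 - β) * w * (g * (t - β * (1 - β) * s)) - (g * (t - β * (1 - β) * s)) ^ 2 := by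
  have hmono : 2 * (1 - γ) * (β * (2 - (1 + γ ^ 2) * β)) - γ * (2 - 3 * β) ^ 2 ≤
      2 * (1 - g) * (β * (2 - (1 + g ^ 2) * β)) - g * (2 - 3 * β) ^ 2 := by
    have : (0 : ℝ) ≤ β * (2 - (1 + γ ^ 2) * β) := by positivity
    have : (0 : ℝ) ≤ 1 - g := by linarith
    gcongr
  have hg1 : g ≤ 1 := hgγ.trans hγ1
  have hE := half_rate_le_form_det hβ0 hβ2 hg0 hg1 (hG.trans hmono)
  have hgβ := step_mul_le_two_sub hβ0 hβ2 hg0 hg1 (hG.trans hmono)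
  have hid := form_mul_diag_eq β g s w t ht
  set κ := 2 * (1 - γ) * (β * (2 - (1 + γ ^ 2) * β)) - γ * (2 - 3 * β) ^ 2
  set C := β * ((2 - β) * (1 + 2 * g) - 2 * g ^ 2 * β) with hC
  have hC0 : 0 < C := by
    apply mul_pos hβ0
    nlinarith [mul_nonneg hg0 (sub_nonneg.2 hgβ)]
  have hC3 : C ≤ 3 := by
    have h1 : 0 ≤ β * (2 - β) * (1 - g) :=
      mul_nonneg (mul_nonneg hβ0.le (by linarith)) (by linarith)
    have h2 : 0 ≤ g ^ 2 * β ^ 2 := by positivity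
    nlinarith only [h1, h2, hC, sq_nonneg (β - 1)]
  refine le_of_mul_le_mul_left ?_ hC0
  rw [hid]
  have h1 := mul_le_mul_of_nonneg_left (hmono.trans ((div_le_iff₀ two_pos).1 hE))
    (show 0 ≤ g * s ^ 2 by positivity)
  have h2 := mul_le_mul_of_nonneg_right hC3 (show 0 ≤ g * (κ / 6) * s ^ 2 by positivity)
  refine le_trans ?_ (le_add_of_nonneg_left (sq_nonneg _))
  nlinarith only [h1, h2]

/-- One step of the high-order tuner decreases the Lyapunov function `‖ξ‖² + ‖θ - ξ‖²`, where `θ`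
and `ξ` are the errors of one row of the two estimates. -/
theorem tuner_lyapunov_decrease {ι : Type*} [Fintype ι] {β γ N : ℝ} (θ ξ φ θ' ξ' : ι → ℝ)
    (hβ0 : 0 < β) (hβ2 : β < 2) (hγ0 : 0 ≤ γ) (hγ1 : γ ≤ 1)
    (hD : 0 ≤ 2 - (1 + γ ^ 2) * β)
    (hG : 0 ≤ 2 * (1 - γ) * (β * (2 - (1 + γ ^ 2) * β)) - γ * (2 - 3 * β) ^ 2)
    (hN : 0 < N) (hφN : φ ⬝ᵥ φ ≤ N)
    (hθ' : θ' = (1 - β) • (θ - (γ * β / N * (θ ⬝ᵥ φ)) • φ) + β • ξ)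
    (hξ' : ξ' = ξ - (γ / N * (θ' ⬝ᵥ φ)) • φ) :
    ξ' ⬝ᵥ ξ' + (θ' - ξ') ⬝ᵥ (θ' - ξ') ≤ ξ ⬝ᵥ ξ + (θ - ξ) ⬝ᵥ (θ - ξ) -
      γ * ((2 * (1 - γ) * (β * (2 - (1 + γ ^ 2) * β)) - γ * (2 - 3 * β) ^ 2) / 6) *
        ((θ ⬝ᵥ φ) ^ 2 / N) := by
  obtain ⟨d, rfl⟩ : ∃ d, θ = ξ + d := ⟨θ - ξ, by abel⟩
  set s := (ξ + d) ⬝ᵥ φ with hs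
  set P := φ ⬝ᵥ φ with hP
  set w := d ⬝ᵥ φ with hw
  have hξφ : ξ ⬝ᵥ φ = s - w := by rw [hs, add_dotProduct]; ring
  set t := θ' ⬝ᵥ φ with ht
  have ht' : t = s * (1 - γ * P / N * (β * (1 - β))) - β * w := by
    rw [ht, hθ']
    simp only [add_dotProduct, sub_dotProduct, smul_dotProduct, smul_eq_mul, hξφ, ← hP, ← hw]
    ring
  have hd' : θ' - ξ' = (1 - β) • d + (γ / N * (t - β * (1 - β) * s)) • φ := by
    rw [hξ', hθ']
    ext i
    simp only [Pi.add_apply, Pi.sub_apply, Pi.smul_apply, smul_eq_mul]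
    ring
  have hcs : w ^ 2 ≤ (d ⬝ᵥ d) * P := by
    simpa only [hw, hP, dotProduct, sq] using Finset.sum_mul_sq_le_sq_mul_sq Finset.univ d φ
  have hdd : 0 ≤ d ⬝ᵥ d := by simpa using dotProduct_star_self_nonneg d
  have hP0 : 0 ≤ P := by simpa using dotProduct_star_self_nonneg φ
  have hξξ : ξ' ⬝ᵥ ξ' = ξ ⬝ᵥ ξ - 2 * (γ / N * t) * (s - w) + (γ / N * t) ^ 2 * P := by
    rw [hξ']
    simp only [sub_dotProduct, dotProduct_sub, smul_dotProduct, dotProduct_smul, smul_eq_mul,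
      dotProduct_comm φ ξ, hξφ, ← hP]
    ring
  have hdd' : (θ' - ξ') ⬝ᵥ (θ' - ξ') = (1 - β) ^ 2 * (d ⬝ᵥ d)
      + 2 * (1 - β) * w * (γ / N * (t - β * (1 - β) * s))
      + (γ / N * (t - β * (1 - β) * s)) ^ 2 * P := by
    rw [hd']
    simp only [add_dotProduct, dotProduct_add, smul_dotProduct, dotProduct_smul, smul_eq_mul,
      dotProduct_comm φ d, ← hw, ← hP]
    ring
  rw [hξξ, hdd', add_sub_cancel_left]
  rcases hP0.eq_or_lt with hPz | hPpos
  · have hφ : φ = 0 := dotProduct_self_eq_zero.1 hPz.symm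
    have hs0 : s = 0 := by rw [hs, hφ, dotProduct_zero]
    have hw0 : w = 0 := by rw [hw, hφ, dotProduct_zero]
    rw [← hPz, hs0, hw0]
    have := mul_nonneg (mul_nonneg hβ0.le (by linarith : 0 ≤ 2 - β)) hdd
    simp only [sub_zero, mul_zero, add_zero, zero_mul, ne_eq, OfNat.ofNat_ne_zero,
      not_false_eq_true, zero_pow, zero_div]
    nlinarith only [this]
  · refine le_of_mul_le_mul_left ?_ hPpos
    have hgγ : γ * P / N ≤ γ := by
      rw [div_le_iff₀ hN]
      exact mul_le_mul_of_nonneg_left hφN hγ0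
    have key := form_lower_bound hβ0 hβ2 hγ1 hD hG (by positivity) hgγ ht'
    have h1 := mul_le_mul_of_nonneg_left hcs (mul_nonneg hβ0.le (by linarith : 0 ≤ 2 - β))
    rw [show γ * P / N = P * (γ / N) by ring] at key
    rw [show ∀ a b : ℝ, γ * a * (b / N) = γ / N * a * b by intros; ring]
    nlinarith only [key, h1]

theorem tendsto_zero_of_lyapunov {V q : ℕ → ℝ} {κ : ℝ} (hκ : 0 < κ) (hV : ∀ k, 0 ≤ V k)
    (hq : ∀ k, 0 ≤ q k) (h : ∀ k, V (k + 1) ≤ V k - κ * q k) :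
    Tendsto q atTop (𝓝 0) := by
  have hanti : Antitone V := antitone_nat_of_succ_le fun k =>
    (h k).trans (sub_le_self _ (mul_nonneg hκ.le (hq k)))
  have hlim := tendsto_atTop_ciInf hanti ⟨0, by rintro _ ⟨k, rfl⟩; exact hV k⟩
  have hdiff := (hlim.sub (hlim.comp (tendsto_add_atTop_nat 1))).const_mul κ⁻¹
  rw [sub_self, mul_zero] at hdiff
  refine squeeze_zero hq (fun k => ?_) hdiff
  rw [inv_mul_eq_div, le_div_iff₀ hκ]
  have := h k
  simp only [Function.comp_apply]
  linarith

theorem le_of_affine_recursion {w : ℕ → ℝ} {l c : ℝ} (hl0 : 0 ≤ l) (hl1 : l < 1) (hc : 0 ≤ c)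
    (hw0 : 0 ≤ w 0) (h : ∀ k, w (k + 1) ≤ l * w k + c) (k : ℕ) : w k ≤ w 0 + c / (1 - l) := by
  have h1 : 0 < 1 - l := by linarith
  induction k with
  | zero => exact le_add_of_nonneg_right (by positivity)
  | succ k ih =>
    have h2 : c / (1 - l) * (1 - l) = c := div_mul_cancel₀ _ h1.ne'
    have := mul_le_mul_of_nonneg_left ih hl0
    nlinarith [h k, mul_nonneg hw0 h1.le]

theorem tendsto_zero_of_contraction {w δ : ℕ → ℝ} {l : ℝ} (hl0 : 0 ≤ l) (hl1 : l < 1)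
    (hw : ∀ k, 0 ≤ w k) (hδ : Tendsto δ atTop (𝓝 0))
    (h : ∀ k, w (k + 1) ≤ l * w k + δ k * (1 + w k)) : Tendsto w atTop (𝓝 0) := by
  rw [Metric.tendsto_atTop]
  intro η hη
  set l' := (1 + l) / 2 with hl'
  have hc : 0 < (1 - l) / 2 * min 1 (η / 2) := by
    have : 0 < 1 - l := by linarith
    positivity
  obtain ⟨K, hK⟩ := eventually_atTop.1 (hδ.eventually (ge_mem_nhds hc))
  have hstep : ∀ j, w (K + j) - η / 2 ≤ l' ^ j * w K := by
    intro j
    induction j with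
    | zero => simp; positivity
    | succ j ih =>
      have h1 := h (K + j)
      have h2 := hK (K + j) (by omega)
      have h3 : δ (K + j) ≤ (1 - l) / 2 := h2.trans
        (mul_le_of_le_one_right (by linarith) (min_le_left _ _))
      have h4 : δ (K + j) ≤ (1 - l) / 2 * (η / 2) := h2.trans
        (mul_le_mul_of_nonneg_left (min_le_right _ _) (by linarith))
      have h5 := mul_le_mul_of_nonneg_right h3 (hw (K + j))
      have h6 := mul_le_mul_of_nonneg_left ih (show 0 ≤ l' by rw [hl']; linarith)
      rw [pow_succ', mul_assoc]
      refine le_trans ?_ h6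
      rw [← add_assoc, hl']
      nlinarith only [h1, h4, h5]
  have hpow : Tendsto (fun j => l' ^ j * w K) atTop (𝓝 0) := by
    simpa using (tendsto_pow_atTop_nhds_zero_of_lt_one (r := l') (by rw [hl']; linarith)
      (by rw [hl']; linarith)).mul_const (w K)
  obtain ⟨J, hJ⟩ := eventually_atTop.1 (hpow.eventually (gt_mem_nhds (half_pos hη)))
  refine ⟨K + J, fun k hk => ?_⟩
  obtain ⟨j, rfl⟩ := Nat.exists_eq_add_of_le (show K ≤ k by omega)
  rw [Real.dist_0_eq_abs, abs_of_nonneg (hw _)]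
  linarith [hstep j, hJ j (by omega)]

section Schur

attribute [local instance] Matrix.linftyOpNormedRing Matrix.linftyOpNormedAlgebra

theorem exists_norm_pow_le_of_spectrum {n : ℕ} [NeZero n] (A : Matrix (Fin n) (Fin n) ℝ)
    (hA : ∀ z ∈ spectrum ℂ (A.map Complex.ofReal), ‖z‖ < 1) :
    ∃ l : ℝ, 0 < l ∧ l < 1 ∧ ∃ q : ℕ, 0 < q ∧ ‖A ^ q‖ ≤ l ^ q := by
  have hρ : spectralRadius ℂ (A.map Complex.ofReal) < (1 : NNReal) :=
    spectrum.spectralRadius_lt_of_forall_lt _ fun z hz => by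
      rw [← NNReal.coe_lt_coe]; simpa using hA z hz
  obtain ⟨l, hl, hl1⟩ := ENNReal.lt_iff_exists_nnreal_btwn.1 hρ
  have hl0 : 0 < l := by
    rw [← ENNReal.coe_pos]; exact pos_of_gt hl
  have hev := (spectrum.pow_nnnorm_pow_one_div_tendsto_nhds_spectralRadius
    (A.map Complex.ofReal)).eventually (gt_mem_nhds hl)
  obtain ⟨q, hq, hq0⟩ := (hev.and (eventually_gt_atTop 0)).exists
  refine ⟨l, hl0, by exact_mod_cast hl1, q, hq0, ?_⟩
  have hnorm : ‖A ^ q‖₊ = ‖A.map Complex.ofReal ^ q‖₊ := by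
    have : A.map Complex.ofReal ^ q = (A ^ q).map Complex.ofReal :=
      (map_pow (Complex.ofRealHom.mapMatrix (m := Fin n)) A q).symm
    rw [this]
    simp [Matrix.linfty_opNNNorm_def]
  rw [← coe_nnnorm, hnorm]
  have hq' := ENNReal.rpow_le_rpow hq.le (show (0 : ℝ) ≤ q by positivity)
  rw [← ENNReal.rpow_mul, one_div_mul_cancel (by positivity), ENNReal.rpow_one,
    ENNReal.rpow_natCast] at hq'
  exact_mod_cast hq'

/-- A Schur stable matrix contracts some function equivalent to the norm. -/
theorem exists_contracted_seminorm {n : ℕ} (A : Matrix (Fin n) (Fin n) ℝ)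
    (hA : ∀ z ∈ spectrum ℂ (A.map Complex.ofReal), ‖z‖ < 1) :
    ∃ (W : (Fin n → ℝ) → ℝ) (l C : ℝ), 0 ≤ l ∧ l < 1 ∧ 0 ≤ C ∧ (∀ v, ‖v‖ ≤ W v) ∧
      (∀ v, W v ≤ C * ‖v‖) ∧ (∀ v v', W (v + v') ≤ W v + W v') ∧
      ∀ v, W (A *ᵥ v) ≤ l * W v := by
  rcases Nat.eq_zero_or_pos n with rfl | hn
  · exact ⟨fun _ => 0, 0, 0, le_rfl, one_pos, le_rfl, fun v => by simp [Subsingleton.elim v 0],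
      by simp, by simp, by simp⟩
  have : NeZero n := ⟨hn.ne'⟩
  obtain ⟨l, hl0, hl1, q, hq0, hq⟩ := exists_norm_pow_le_of_spectrum A hA
  refine ⟨fun v => ∑ j ∈ Finset.range q, (l ^ j)⁻¹ * ‖A ^ j *ᵥ v‖, l,
    ∑ j ∈ Finset.range q, (l ^ j)⁻¹ * ‖A ^ j‖, hl0.le, hl1, by positivity, fun v => ?_,
    fun v => ?_, fun v v' => ?_, fun v => ?_⟩
  · refine le_trans (by simp) (Finset.single_le_sum (f := fun j => (l ^ j)⁻¹ * ‖A ^ j *ᵥ v‖)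
      (fun j _ => by positivity) (Finset.mem_range.2 hq0))
  · rw [Finset.sum_mul]
    refine Finset.sum_le_sum fun j _ => ?_
    rw [mul_assoc]
    gcongr
    exact Matrix.linfty_opNorm_mulVec _ _
  · rw [← Finset.sum_add_distrib]
    refine Finset.sum_le_sum fun j _ => ?_
    rw [← mul_add, Matrix.mulVec_add]
    gcongr
    exact norm_add_le _ _
  · have hshift : ∀ j, (l ^ j)⁻¹ * ‖A ^ j *ᵥ A *ᵥ v‖ =
        l * ((l ^ (j + 1))⁻¹ * ‖A ^ (j + 1) *ᵥ v‖) := by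
      intro j
      rw [Matrix.mulVec_mulVec, ← pow_succ, pow_succ l]
      field_simp
    simp_rw [hshift, ← Finset.mul_sum]
    refine mul_le_mul_of_nonneg_left ?_ hl0.le
    have h1 := Finset.sum_range_succ (fun j => (l ^ j)⁻¹ * ‖A ^ j *ᵥ v‖) q
    rw [Finset.sum_range_succ'] at h1
    have h2 : (l ^ q)⁻¹ * ‖A ^ q *ᵥ v‖ ≤ ‖v‖ := by
      rw [inv_mul_le_iff₀ (by positivity)]
      exact (Matrix.linfty_opNorm_mulVec _ _).trans (by gcongr)
    simp only [pow_zero, inv_one, one_mul, Matrix.one_mulVec] at h1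
    linarith

theorem exists_mulVec_norm_le {m n : ℕ} (B : Matrix (Fin n) (Fin m) ℝ) :
    ∃ c : ℝ, 0 ≤ c ∧ ∀ v, ‖B *ᵥ v‖ ≤ c * ‖v‖ := by
  obtain ⟨c, hc, h⟩ := (LinearMap.toContinuousLinearMap B.mulVecLin).bound
  exact ⟨c, hc.le, h⟩

end Schur

theorem nonsing_inv_gram_mulVec {m n : ℕ} (B : Matrix (Fin n) (Fin m) ℝ)
    (hB : Function.Injective B.mulVec) (v : Fin m → ℝ) :
    (Bᵀ * B)⁻¹ *ᵥ (Bᵀ *ᵥ (B *ᵥ v)) = v := by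
  have hdet : IsUnit (Bᵀ * B).det := by
    have h := (Matrix.PosDef.conjTranspose_mul_self B hB).det_pos
    rw [Matrix.conjTranspose_eq_transpose_of_trivial] at h
    exact h.ne'.isUnit
  rw [Matrix.mulVec_mulVec v Bᵀ B, Matrix.mulVec_mulVec, Matrix.nonsing_inv_mul _ hdet,
    Matrix.one_mulVec]

theorem sum_sq_le_card_mul_norm_sq {n : ℕ} (x : Fin n → ℝ) : ∑ j, x j ^ 2 ≤ n * ‖x‖ ^ 2 := by
  have h : ∀ j ∈ Finset.univ, x j ^ 2 ≤ ‖x‖ ^ 2 := fun j _ => by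
    rw [← sq_abs, ← Real.norm_eq_abs]
    gcongr
    exact norm_le_pi_norm x j
  simpa using Finset.sum_le_card_nsmul _ _ _ h

theorem norm_le_sum_sqrt_div_mul {m : ℕ} (v : Fin m → ℝ) {N b : ℝ} (hN : 0 < N) (hb : 0 ≤ b)
    (hNb : N ≤ b ^ 2) : ‖v‖ ≤ (∑ i, √(v i ^ 2 / N)) * b := by
  have hsum : 0 ≤ ∑ i, √(v i ^ 2 / N) := Finset.sum_nonneg fun i _ => Real.sqrt_nonneg _
  refine (pi_norm_le_iff_of_nonneg (mul_nonneg hsum hb)).2 fun i => ?_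
  have h1 : √(v i ^ 2 / N) ≤ ∑ i, √(v i ^ 2 / N) :=
    Finset.single_le_sum (f := fun i => √(v i ^ 2 / N)) (fun _ _ => Real.sqrt_nonneg _)
      (Finset.mem_univ i)
  have h2 : √N ≤ b := Real.sqrt_le_iff.2 ⟨hb, hNb⟩
  have h3 : ‖v i‖ = √(v i ^ 2 / N) * √N := by
    rw [← Real.sqrt_mul (by positivity), div_mul_cancel₀ _ hN.ne', Real.sqrt_sq_eq_abs,
      Real.norm_eq_abs]
  rw [h3]
  exact mul_le_mul h1 h2 (Real.sqrt_nonneg _) hsum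

/-- The regressor grows at most linearly with the state. -/
theorem regressor_sq_le {n p : ℕ} (f : Fin p → (Fin n → ℝ) → ℝ) (Mf : Fin p → ℝ)
    (hLip : ∀ i, ∀ x y : Fin n → ℝ, |f i x - f i y| ≤ Mf i * √(∑ j, (x j - y j) ^ 2))
    (hf0 : ∀ i, f i 0 = 0) (x : Fin n → ℝ) :
    ∑ j, Fin.append x (fun i => -f i x) j ^ 2 ≤ (1 + ∑ i, Mf i ^ 2) * n * ‖x‖ ^ 2 := by
  have hx := sum_sq_le_card_mul_norm_sq x
  have hx0 : 0 ≤ ∑ j, x j ^ 2 := by positivity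
  have hf : ∀ i, f i x ^ 2 ≤ Mf i ^ 2 * ∑ j, x j ^ 2 := by
    intro i
    have h := hLip i x 0
    simp only [hf0, sub_zero, Pi.zero_apply] at h
    rw [← sq_abs (f i x), ← Real.sq_sqrt hx0, ← mul_pow]
    exact pow_le_pow_left₀ (abs_nonneg _) h 2
  rw [Fin.sum_univ_add]
  simp only [Fin.append_left, Fin.append_right, neg_sq]
  calc ∑ j, x j ^ 2 + ∑ i, f i x ^ 2
      ≤ ∑ j, x j ^ 2 + ∑ i, Mf i ^ 2 * ∑ j, x j ^ 2 := by gcongr with i; exact hf i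
    _ = (1 + ∑ i, Mf i ^ 2) * ∑ j, x j ^ 2 := by rw [← Finset.sum_mul]; ring
    _ ≤ (1 + ∑ i, Mf i ^ 2) * (n * ‖x‖ ^ 2) := by gcongr
    _ = _ := by ring

/-- adaptive control of the nonlinear plant with the high-order
    tuner adaptive law drives the tracking error to zero. -/
theorem hot_adaptive_control_tracking_error_to_zero {n m p : ℕ}
    (Ap Am : Matrix (Fin n) (Fin n) ℝ) (B : Matrix (Fin n) (Fin m) ℝ)
    (a : Fin p → Fin m → ℝ) (f : Fin p → (Fin n → ℝ) → ℝ) (Mf : Fin p → ℝ)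
    (hB : Function.Injective B.mulVec)
    (hLip : ∀ i, ∀ x y : Fin n → ℝ,
      |f i x - f i y| ≤ Mf i * Real.sqrt (∑ j, (x j - y j) ^ 2))
    (hf0 : ∀ i, f i 0 = 0)
    (hSchur : ∀ z ∈ spectrum ℂ (Am.map Complex.ofReal), ‖z‖ < 1)
    (Kstar : Matrix (Fin m) (Fin n) ℝ) (hmatch : Am = Ap + B * Kstar)
    (r : ℕ → Fin m → ℝ) (rmax : ℝ)
    (hr : ∀ k, Real.sqrt (∑ i, r k i ^ 2) ≤ rmax)
    (xp xm : ℕ → Fin n → ℝ) (u : ℕ → Fin m → ℝ)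
    (Θhat Ξhat Θbar : ℕ → Matrix (Fin m) (Fin (n + p)) ℝ)
    (φ : ℕ → Fin (n + p) → ℝ)
    (hφ : ∀ k, φ k = Fin.append (xp k) (fun i => -f i (xp k)))
    (hplant : ∀ k, xp (k + 1)
      = Ap.mulVec (xp k) + B.mulVec ((∑ i, f i (xp k) • a i) + u k))
    (hu : ∀ k, u k = (Θhat k).mulVec (φ k) + r k)
    (href : ∀ k, xm (k + 1) = Am.mulVec (xm k) + B.mulVec (r k))
    (e : ℕ → Fin n → ℝ) (he : ∀ k, e k = xp k - xm k)
    (ε : ℕ → Fin m → ℝ)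
    (hεdef : ∀ k, ε (k + 1)
      = (Bᵀ * B)⁻¹.mulVec (Bᵀ.mulVec (e (k + 1) - Am.mulVec (e k))))
    (μ γ β : ℝ) (hμ : 0 < μ) (hβ0 : 0 < β) (hβ2 : β < 2)
    (hγ0 : 0 < γ) (hγ : γ < Real.sqrt ((2 - β) / β))
    (hα : 0 < 2 * (1 - γ) - γ * (2 - 3 * β) ^ 2 / (β * (2 - (1 + γ ^ 2) * β)))
    (N : ℕ → ℝ) (hN : ∀ k, N k = max μ (∑ j, φ k j ^ 2))
    (hΘbar : ∀ k, Θbar k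
      = Θhat k - (γ * β / N k) • Matrix.vecMulVec (ε (k + 1)) (φ k))
    (hΘ : ∀ k, Θhat (k + 1) = Θbar k - β • (Θbar k - Ξhat k))
    (hΞ : ∀ k, Ξhat (k + 1) = Ξhat k - (γ / N k) • Matrix.vecMulVec
      ((Θhat (k + 1) - Θhat k).mulVec (φ k) + ε (k + 1)) (φ k))
    (hinit : Ξhat 0 = Θhat 0) :
    Filter.Tendsto (fun k => Real.sqrt (∑ i, e k i ^ 2))
      Filter.atTop (nhds 0) := by
  obtain ⟨W, l, C, hl0, hl1, hC0, hnW, hWC, hWadd, hWA⟩ := exists_contracted_seminorm Am hSchur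
  obtain ⟨cB, hcB0, hcB⟩ := exists_mulVec_norm_le B
  have hW0 : ∀ v, 0 ≤ W v := fun v => (norm_nonneg v).trans (hnW v)
  have hWB : ∀ x v, W (Am *ᵥ x + B *ᵥ v) ≤ l * W x + C * (cB * ‖v‖) := fun x v =>
    (hWadd _ _).trans (add_le_add (hWA x) ((hWC _).trans (by gcongr; exact hcB v)))
  have hNpos : ∀ k, 0 < N k := fun k => by rw [hN]; exact lt_max_of_lt_left hμ
  -- the error equations
  set Θs : Matrix (Fin m) (Fin (n + p)) ℝ :=
    Matrix.of fun i => Fin.append (Kstar i) (fun j => a j i) with hΘs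
  have hΘsφ : ∀ k, Θs *ᵥ φ k = Kstar *ᵥ xp k - ∑ i, f i (xp k) • a i := by
    intro k
    ext i
    simp only [Matrix.mulVec, dotProduct, hΘs, hφ, Fin.sum_univ_add, Matrix.of_apply,
      Fin.append_left, Fin.append_right, Pi.sub_apply, Finset.sum_apply, Pi.smul_apply,
      smul_eq_mul, mul_comm (a _ i), neg_mul, Finset.sum_neg_distrib, sub_eq_add_neg]
  have herr : ∀ k, e (k + 1) = Am *ᵥ e k + B *ᵥ ((Θhat k - Θs) *ᵥ φ k) := by
    intro k
    rw [he, he, hplant, href, hu, Matrix.sub_mulVec, hΘsφ, hmatch]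
    simp only [Matrix.mulVec_sub, Matrix.mulVec_add, Matrix.add_mulVec, Matrix.mulVec_mulVec]
    abel
  have hε : ∀ k, ε (k + 1) = (Θhat k - Θs) *ᵥ φ k := by
    intro k
    rw [hεdef, herr, add_sub_cancel_left, nonsing_inv_gram_mulVec B hB]
  -- the gain conditions
  have hD : 0 < 2 - (1 + γ ^ 2) * β := by
    have h := (Real.lt_sqrt hγ0.le).1 hγ
    rw [lt_div_iff₀ hβ0] at h
    linarith
  have hβD : 0 < β * (2 - (1 + γ ^ 2) * β) := mul_pos hβ0 hD
  have hγ1 : γ ≤ 1 := by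
    have : 0 ≤ γ * (2 - 3 * β) ^ 2 / (β * (2 - (1 + γ ^ 2) * β)) := by positivity
    linarith
  have hG : 0 < 2 * (1 - γ) * (β * (2 - (1 + γ ^ 2) * β)) - γ * (2 - 3 * β) ^ 2 := by
    have h := mul_pos hα hβD
    rwa [sub_mul, div_mul_cancel₀ _ (ne_of_gt hβD)] at h
  -- the normalized prediction error vanishes
  have hq : ∀ i, Tendsto (fun k => ε (k + 1) i ^ 2 / N k) atTop (𝓝 0) := by
    intro i
    refine tendsto_zero_of_lyapunov
      (V := fun k => (Ξhat k i - Θs i) ⬝ᵥ (Ξhat k i - Θs i) +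
        ((Θhat k i - Θs i) - (Ξhat k i - Θs i)) ⬝ᵥ ((Θhat k i - Θs i) - (Ξhat k i - Θs i)))
      (mul_pos hγ0 (div_pos hG (by norm_num : (0 : ℝ) < 6)))
      (fun k => add_nonneg (by simpa using dotProduct_star_self_nonneg (Ξhat k i - Θs i))
        (by simpa using dotProduct_star_self_nonneg ((Θhat k i - Θs i) - (Ξhat k i - Θs i))))
      (fun k => div_nonneg (sq_nonneg _) (hNpos k).le) (fun k => ?_)
    have hεi : ε (k + 1) i = (Θhat k i - Θs i) ⬝ᵥ φ k := congrFun (hε k) i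
    have hεi' : ((Θhat (k + 1) - Θhat k) *ᵥ φ k + ε (k + 1)) i
        = (Θhat (k + 1) i - Θs i) ⬝ᵥ φ k := by
      rw [hε, ← Matrix.add_mulVec, sub_add_sub_cancel]
      rfl
    rw [hεi]
    refine tuner_lyapunov_decrease _ _ (φ k) _ _ hβ0 hβ2 hγ0.le hγ1 hD.le hG.le (hNpos k) ?_ ?_ ?_
    · rw [hN]
      refine le_trans (le_of_eq ?_) (le_max_right _ _)
      simp only [dotProduct, sq]
    · ext j
      rw [← hεi]
      simp only [hΘ k, hΘbar k, Matrix.sub_apply, Matrix.smul_apply, Matrix.vecMulVec_apply,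
        Pi.sub_apply, Pi.add_apply, Pi.smul_apply, smul_eq_mul]
      ring
    · ext j
      rw [← hεi', hΞ k]
      simp only [Matrix.sub_apply, Matrix.smul_apply, Matrix.vecMulVec_apply,
        Pi.sub_apply, Pi.smul_apply, smul_eq_mul]
      ring
  -- the normalization is controlled by the tracking error
  have hrmax : ∀ k, ‖r k‖ ≤ rmax := by
    intro k
    have h0 : 0 ≤ rmax := (Real.sqrt_nonneg _).trans (hr k)
    refine (pi_norm_le_iff_of_nonneg h0).2 fun i => le_trans ?_ (hr k)
    refine Real.le_sqrt_of_sq_le ?_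
    rw [Real.norm_eq_abs, sq_abs]
    exact Finset.single_le_sum (f := fun i => r k i ^ 2) (fun _ _ => sq_nonneg _)
      (Finset.mem_univ i)
  have hrmax0 : 0 ≤ rmax := (norm_nonneg _).trans (hrmax 0)
  obtain ⟨M, hM0, hM⟩ : ∃ M, 0 ≤ M ∧ ∀ k, ‖xm k‖ ≤ M := by
    have h : ∀ k, W (xm (k + 1)) ≤ l * W (xm k) + C * (cB * rmax) := fun k => by
      rw [href]
      exact (hWB _ _).trans (by gcongr; exact hrmax k)
    have hle := fun k => (hnW _).trans (le_of_affine_recursion (w := fun k => W (xm k)) hl0 hl1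
      (by positivity) (hW0 _) h k)
    exact ⟨_, (norm_nonneg _).trans (hle 0), hle⟩
  set L : ℝ := (1 + ∑ i, Mf i ^ 2) * n with hL
  have hL0 : 0 ≤ L := by positivity
  have hNle : ∀ k, N k ≤ (√(μ + L * (1 + M) ^ 2) * (1 + W (e k))) ^ 2 := by
    intro k
    have hx : ‖xp k‖ ≤ (1 + M) * (1 + W (e k)) := by
      have h1 : xp k = e k + xm k := by rw [he]; abel
      have h2 := norm_add_le (e k) (xm k)
      rw [← h1] at h2
      nlinarith [hnW (e k), hM k, mul_nonneg hM0 (hW0 (e k))]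
    have h1 : (1 : ℝ) ≤ (1 + W (e k)) ^ 2 := one_le_pow₀ (by linarith [hW0 (e k)])
    have h2 := mul_le_mul_of_nonneg_left (pow_le_pow_left₀ (norm_nonneg _) hx 2) hL0
    have h3 := regressor_sq_le f Mf hLip hf0 (xp k)
    rw [← hφ, ← hL] at h3
    have h4 := le_mul_of_one_le_right hμ.le h1
    have h5 : 0 ≤ L * ((1 + M) * (1 + W (e k))) ^ 2 := by positivity
    rw [mul_pow, Real.sq_sqrt (by positivity), hN]
    refine max_le ?_ ?_ <;> nlinarith only [h2, h3, h4, h5, hμ]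
  -- the tracking error is contracted up to a vanishing relative perturbation
  have hδ : Tendsto (fun k => C * (cB * ((∑ i, √(ε (k + 1) i ^ 2 / N k)) *
      √(μ + L * (1 + M) ^ 2)))) atTop (𝓝 0) := by
    have h : Tendsto (fun k => ∑ i, √(ε (k + 1) i ^ 2 / N k)) atTop (𝓝 0) := by
      simpa using tendsto_finsetSum Finset.univ fun i _ => (hq i).sqrt
    simpa using ((h.mul_const _).const_mul cB).const_mul C
  have hWe : Tendsto (fun k => W (e k)) atTop (𝓝 0) := by
    refine tendsto_zero_of_contraction hl0 hl1 (fun k => hW0 _) hδ fun k => ?_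
    rw [herr, ← hε]
    refine (hWB _ _).trans ?_
    have h := norm_le_sum_sqrt_div_mul (ε (k + 1)) (hNpos k)
      (mul_nonneg (Real.sqrt_nonneg _) (by linarith [hW0 (e k)])) (hNle k)
    have h' := mul_le_mul_of_nonneg_left (mul_le_mul_of_nonneg_left h hcB0) hC0
    linarith only [h']
  have he0 : Tendsto e atTop (𝓝 0) := squeeze_zero_norm (fun k => hnW _) hWe
  have hcont : Continuous fun v : Fin n → ℝ => √(∑ i, v i ^ 2) := by fun_prop
  simpa [Function.comp_def] using (hcont.tendsto 0).comp he0
end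

section
/- Fix Θ_* ∈ ℝ^{m×q}, μ > 0, 0 < β < 2, 0 < γ < √((2−β)/β), and suppose α := 2(1−γ) − γ(2−3β)²/(β(2−(1+γ²)β)) > 0. Let (φ_k)_{k≥0} be any sequence in ℝ^q and run the high-order tuner: N_k = max{μ, ‖φ_k‖²}, ε_{k+1} = (Θ̂_k − Θ_*)φ_k, Θ̄_k = Θ̂_k − (γβ/N_k) ε_{k+1} φ_k^⊤, Θ̂_{k+1} = Θ̄_k − β(Θ̄_k − Ξ̂_k), Ξ̂_{k+1} = Ξ̂_k − (γ/N_k)((Θ̂_{k+1} − Θ̂_k)φ_k + ε_{k+1})φ_k^⊤, with Ξ̂_0 = Θ̂_0. Then Σ_{k=0}^∞ ‖ε_{k+1}‖²/N_k ≤ (2+α) (‖Ξ̂_0 − Θ_*‖_F² + ‖Θ̂_0 − Ξ̂_0‖_F²) / (2γα(1−γβ)²); in particular lim_{k→∞} ‖ε_{k+1}‖²/N_k = 0. -/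
open scoped BigOperators

/-- Scalar form of the one-step decrease of the Lyapunov function: `x` is the a posteriori error,
`g` the component of the momentum along the regressor and `s` the normalized regressor energy. -/
lemma hot_scalar_bound {γ β α s x g e Q : ℝ} (hβ0 : 0 < β) (hβ2 : β < 2) (hγ0 : 0 < γ)
    (hA : 0 < β * (2 - (1 + γ ^ 2) * β)) (hγβ : γ * β < 1)
    (hα : α = 2 * (1 - γ) - γ * (2 - 3 * β) ^ 2 / (β * (2 - (1 + γ ^ 2) * β)))
    (hα0 : 0 < α) (hs0 : 0 ≤ s) (hs1 : s ≤ 1) (he : (1 - γ * β * s) * e = x + β * g)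
    (hQ : g ^ 2 ≤ Q) :
    2 * γ * α * (1 - γ * β) ^ 2 / (2 + α) * e ^ 2 ≤
      β * (2 - β) * Q + 2 * γ * (1 - γ * s) * x ^ 2 - 4 * γ * (1 - β) * x * g
        + 2 * γ * β * e * g + γ ^ 2 * β ^ 2 * s * e ^ 2 := by
  set A := β * (2 - (1 + γ ^ 2) * β) with hAdef
  have hQ' : β * (2 - β) * g ^ 2 ≤ β * (2 - β) * Q :=
    mul_le_mul_of_nonneg_left hQ (mul_nonneg hβ0.le (by linarith))
  have hcross : 2 * γ * β * e * g
      = 2 * γ * β * (x + β * g) * g + 2 * γ ^ 2 * β ^ 2 * s * e * g := by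
    linear_combination (2 * γ * β * g) * he
  have hsq : 0 ≤ γ ^ 2 * β ^ 2 * s * (e + g) ^ 2 := by positivity
  have hs1' : 0 ≤ 1 - s := by linarith
  have hg : 0 ≤ γ ^ 2 * β ^ 2 * (1 - s) * g ^ 2 := by positivity
  have hx : 0 ≤ γ ^ 2 * (1 - s) * x ^ 2 := by positivity
  have hcomplete : 0 ≤ A * g ^ 2 - 2 * γ * (2 - 3 * β) * x * g
      + γ ^ 2 * ((2 - 3 * β) ^ 2 / A) * x ^ 2 := by
    have : A * g ^ 2 - 2 * γ * (2 - 3 * β) * x * g + γ ^ 2 * ((2 - 3 * β) ^ 2 / A) * x ^ 2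
        = (A * g - γ * (2 - 3 * β) * x) ^ 2 / A := by
      field_simp
      ring
    rw [this]
    positivity
  have hlower : γ * α * x ^ 2 + 2 * γ * β ^ 2 * g ^ 2 ≤
      β * (2 - β) * Q + 2 * γ * (1 - γ * s) * x ^ 2 - 4 * γ * (1 - β) * x * g
        + 2 * γ * β * e * g + γ ^ 2 * β ^ 2 * s * e ^ 2 := by
    rw [hcross]
    rw [mul_div_assoc] at hα
    generalize (2 - 3 * β) ^ 2 / A = K at hα hcomplete
    rw [hAdef] at hcomplete
    rw [hα]
    linarith
  have hyoung : 2 * γ * α * (x + β * g) ^ 2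
      ≤ (2 + α) * (γ * α * x ^ 2 + 2 * γ * β ^ 2 * g ^ 2) := by
    nlinarith [mul_nonneg hγ0.le (sq_nonneg (α * x - 2 * (β * g)))]
  have herr : (1 - γ * β) ^ 2 * e ^ 2 ≤ (x + β * g) ^ 2 := by
    rw [← he, mul_pow]
    have : γ * β * s ≤ γ * β := mul_le_of_le_one_right (by positivity) hs1
    gcongr
  refine le_trans ?_ hlower
  rw [div_mul_eq_mul_div, div_le_iff₀ (by linarith)]
  nlinarith [mul_le_mul_of_nonneg_left herr (by positivity : 0 ≤ 2 * γ * α)]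

/-- One-step decrease of the Lyapunov function of the high-order tuner, for a single row. -/
lemma hot_row_decrease {q : ℕ} {γ β α N e : ℝ} (hβ0 : 0 < β) (hβ2 : β < 2) (hγ0 : 0 < γ)
    (hA : 0 < β * (2 - (1 + γ ^ 2) * β)) (hγβ : γ * β < 1)
    (hα : α = 2 * (1 - γ) - γ * (2 - 3 * β) ^ 2 / (β * (2 - (1 + γ ^ 2) * β)))
    (hα0 : 0 < α) (hN : 0 < N) {θ ξ θ' ξ' G φ : Fin q → ℝ} (hφ : φ ⬝ᵥ φ ≤ N)
    (he : e = θ ⬝ᵥ φ) (hG : θ = ξ + G + (γ * β / N * e) • φ)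
    (hθ' : θ' = ξ + (1 - β) • G) (hξ' : ξ' = ξ - (γ / N * (θ' ⬝ᵥ φ)) • φ) :
    2 * γ * α * (1 - γ * β) ^ 2 / (2 + α) * (e ^ 2 / N) ≤
      (ξ ⬝ᵥ ξ + (θ - ξ) ⬝ᵥ (θ - ξ)) - (ξ' ⬝ᵥ ξ' + (θ' - ξ') ⬝ᵥ (θ' - ξ')) := by
  have hCS : (G ⬝ᵥ φ) ^ 2 ≤ N * (G ⬝ᵥ G) := by
    have h := Finset.sum_mul_sq_le_sq_mul_sq Finset.univ G φ
    simp only [sq (G _), sq (φ _)] at h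
    have hGG : 0 ≤ G ⬝ᵥ G := Finset.sum_nonneg fun i _ => mul_self_nonneg (G i)
    calc (G ⬝ᵥ φ) ^ 2 ≤ (G ⬝ᵥ G) * (φ ⬝ᵥ φ) := h
      _ ≤ (G ⬝ᵥ G) * N := mul_le_mul_of_nonneg_left hφ hGG
      _ = N * (G ⬝ᵥ G) := mul_comm _ _
  have hφ0 : 0 ≤ φ ⬝ᵥ φ := Finset.sum_nonneg fun i _ => mul_self_nonneg (φ i)
  obtain ⟨x, hx⟩ : ∃ x, x = θ' ⬝ᵥ φ := ⟨_, rfl⟩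
  rw [← hx] at hξ'
  have hx' : x = ξ ⬝ᵥ φ + (1 - β) * (G ⬝ᵥ φ) := by
    simp [hx, hθ']
  have he' : e = ξ ⬝ᵥ φ + G ⬝ᵥ φ + γ * β / N * e * (φ ⬝ᵥ φ) := by
    conv_lhs => rw [he, hG]
    simp
  have key := hot_scalar_bound hβ0 hβ2 hγ0 hA hγβ hα hα0 (s := φ ⬝ᵥ φ / N) (x := x)
    (g := G ⬝ᵥ φ) (e := e) (div_nonneg hφ0 hN.le) ((div_le_one hN).2 hφ)
    (by linear_combination he' - hx') hCS
  have hD : θ - ξ = G + (γ * β / N * e) • φ := by rw [hG]; abel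
  have hD' : θ' - ξ' = (1 - β) • G + (γ / N * x) • φ := by rw [hθ', hξ']; abel
  rw [hD, hD', hξ']
  simp only [add_dotProduct, dotProduct_add, sub_dotProduct, dotProduct_sub, smul_dotProduct,
    dotProduct_smul, smul_eq_mul, dotProduct_comm φ]
  have key' := div_le_div_of_nonneg_right key hN.le
  rw [mul_div_assoc] at key'
  refine key'.trans (le_of_eq ?_)
  have hξφ : ξ ⬝ᵥ φ = x - (1 - β) * (G ⬝ᵥ φ) := by linarith
  rw [hξφ]
  field_simp
  ring

/-- along the high-order tuner, the normalized squared
    prediction errors are summable with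
    Σ ‖ε_{k+1}‖²/N_k ≤ (2+α)V₀/(2γα(1−γβ)²); in particular they tend to 0. -/
theorem hot_prediction_error_summable {m q : ℕ}
    (Θstar : Matrix (Fin m) (Fin q) ℝ) (μ γ β : ℝ)
    (hμ : 0 < μ) (hβ0 : 0 < β) (hβ2 : β < 2)
    (hγ0 : 0 < γ) (hγ : γ < Real.sqrt ((2 - β) / β))
    (hα : 0 < 2 * (1 - γ) - γ * (2 - 3 * β) ^ 2 / (β * (2 - (1 + γ ^ 2) * β)))
    (φ : ℕ → Fin q → ℝ)
    (Θhat Ξhat Θbar : ℕ → Matrix (Fin m) (Fin q) ℝ)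
    (N : ℕ → ℝ) (hN : ∀ k, N k = max μ (∑ j, φ k j ^ 2))
    (ε : ℕ → Fin m → ℝ) (hε : ∀ k, ε (k + 1) = (Θhat k - Θstar).mulVec (φ k))
    (hΘbar : ∀ k, Θbar k
      = Θhat k - (γ * β / N k) • Matrix.vecMulVec (ε (k + 1)) (φ k))
    (hΘ : ∀ k, Θhat (k + 1) = Θbar k - β • (Θbar k - Ξhat k))
    (hΞ : ∀ k, Ξhat (k + 1) = Ξhat k - (γ / N k) • Matrix.vecMulVec
      ((Θhat (k + 1) - Θhat k).mulVec (φ k) + ε (k + 1)) (φ k))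
    (hinit : Ξhat 0 = Θhat 0) :
    let α := 2 * (1 - γ) - γ * (2 - 3 * β) ^ 2 / (β * (2 - (1 + γ ^ 2) * β))
    Summable (fun k => (∑ i, ε (k + 1) i ^ 2) / N k) ∧
      (∑' k, (∑ i, ε (k + 1) i ^ 2) / N k)
        ≤ (2 + α) * ((∑ i, ∑ j, (Ξhat 0 - Θstar) i j ^ 2)
              + ∑ i, ∑ j, (Θhat 0 - Ξhat 0) i j ^ 2)
          / (2 * γ * α * (1 - γ * β) ^ 2) ∧
      Filter.Tendsto (fun k => (∑ i, ε (k + 1) i ^ 2) / N k)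
        Filter.atTop (nhds 0) := by
  intro α
  obtain ⟨c, hc⟩ : ∃ c, c = 2 * γ * α * (1 - γ * β) ^ 2 / (2 + α) := ⟨_, rfl⟩
  have hα0 : 0 < α := hα
  have hγ2 : γ ^ 2 * β < 2 - β := by
    have h := (Real.lt_sqrt hγ0.le).1 hγ
    rwa [lt_div_iff₀ hβ0] at h
  have hA : 0 < β * (2 - (1 + γ ^ 2) * β) := mul_pos hβ0 (by linarith)
  have hγβ : γ * β < 1 := by
    nlinarith [mul_lt_mul_of_pos_right hγ2 hβ0, sq_nonneg (β - 1), sq_nonneg (γ * β - 1)]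
  have hγβ' : 0 < 1 - γ * β := by linarith
  have hc0 : 0 < c := by rw [hc]; positivity
  have hN0 : ∀ k, 0 < N k := fun k => by rw [hN]; exact lt_max_of_lt_left hμ
  let V : ℕ → ℝ := fun k =>
    (∑ i, ∑ j, (Ξhat k - Θstar) i j ^ 2) + ∑ i, ∑ j, (Θhat k - Ξhat k) i j ^ 2
  have hstep : ∀ k, c * ((∑ i, ε (k + 1) i ^ 2) / N k) ≤ V k - V (k + 1) := by
    intro k
    simp only [V]
    rw [Finset.sum_div, Finset.mul_sum, ← Finset.sum_add_distrib, ← Finset.sum_add_distrib,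
      ← Finset.sum_sub_distrib]
    refine Finset.sum_le_sum fun i _ => ?_
    have he : ε (k + 1) i = (Θhat k - Θstar) i ⬝ᵥ φ k := congrFun (hε k) i
    have hφ : φ k ⬝ᵥ φ k ≤ N k := by
      rw [hN]
      refine le_max_of_le_right (le_of_eq ?_)
      simp [dotProduct, sq]
    have h := hot_row_decrease (θ := (Θhat k - Θstar) i) (ξ := (Ξhat k - Θstar) i)
      (θ' := (Θhat (k + 1) - Θstar) i) (ξ' := (Ξhat (k + 1) - Θstar) i)
      (G := (Θbar k - Ξhat k) i) hβ0 hβ2 hγ0 hA hγβ rfl hα0 (hN0 k) hφ he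
      (by
        ext j
        simp [hΘbar, Matrix.vecMulVec_apply]
        ring)
      (by
        ext j
        simp [hΘ]
        ring)
      (by
        have hx : ((Θhat (k + 1) - Θhat k).mulVec (φ k) + ε (k + 1)) i
            = (Θhat (k + 1) - Θstar) i ⬝ᵥ φ k := by
          rw [hε, ← Matrix.add_mulVec, sub_add_sub_cancel]
          rfl
        ext j
        rw [← hx]
        simp only [hΞ k, Matrix.sub_apply, Matrix.smul_apply, Matrix.vecMulVec_apply,
          Pi.sub_apply, Pi.smul_apply, smul_eq_mul]
        ring)
    rw [← hc] at h
    have hdiff : ∀ l, (Θhat l - Θstar) i - (Ξhat l - Θstar) i = (Θhat l - Ξhat l) i := fun l =>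
      congrFun (sub_sub_sub_cancel_right (Θhat l) (Ξhat l) Θstar) i
    simp only [hdiff, dotProduct, ← sq] at h
    exact h
  have hV0 : ∀ k, 0 ≤ V k := fun k => by positivity
  have hsum : ∀ n, ∑ k ∈ Finset.range n, (∑ i, ε (k + 1) i ^ 2) / N k ≤ V 0 / c := by
    intro n
    rw [le_div_iff₀ hc0, mul_comm, Finset.mul_sum]
    calc _ ≤ ∑ k ∈ Finset.range n, (V k - V (k + 1)) := Finset.sum_le_sum fun k _ => hstep k
      _ = V 0 - V n := Finset.sum_range_sub' V n
      _ ≤ V 0 := sub_le_self _ (hV0 n)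
  have hnonneg : ∀ k, 0 ≤ (∑ i, ε (k + 1) i ^ 2) / N k := fun k =>
    div_nonneg (Finset.sum_nonneg fun i _ => sq_nonneg _) (hN0 k).le
  have hsummable := summable_of_sum_range_le hnonneg hsum
  refine ⟨hsummable, ?_, hsummable.tendsto_atTop_zero⟩
  refine (Real.tsum_le_of_sum_range_le hnonneg hsum).trans (le_of_eq ?_)
  rw [hc, div_div_eq_mul_div, mul_comm (V 0)]
end
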